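/- arXiv:2002.01298 — 2 statements merged into one kernel-verified Lean document; each statement's English description precedes it below -/
import Mathlib

section
/- For every positive integer r, every real a > 0, and every signature s = (s_1,…,s_r), one has Σ_{j=1}^r c_s(j) = r, where c_s(j) = ∏_{k≠j, 1≤k≤r} (s_j − s_k + (a/2)(k−j+1))/(s_j − s_k + (a/2)(k−j)). (Second half of Lemma 3.3.) -/
open Finset

/-- The coefficient `c_s(j)` from Lemma 3.3 of the paper:
`c_s(j) = ∏_{k≠j} (s_j − s_k + (a/2)(k−j+1))/(s_j − s_k + (a/2)(k−j))`
(indices are zero-based, which does not change the differences `k − j`). -/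
noncomputable def cFun {r : ℕ} (a : ℝ) (s : Fin r → ℕ) (j : Fin r) : ℝ :=
  ∏ k ∈ Finset.univ.erase j,
    (((s j : ℝ) - (s k : ℝ) + (a / 2) * (((k : ℕ) : ℝ) - ((j : ℕ) : ℝ) + 1)) /
      ((s j : ℝ) - (s k : ℝ) + (a / 2) * (((k : ℕ) : ℝ) - ((j : ℕ) : ℝ))))

/-!
Put `x_j = s_j - (a/2) j` and `h = a/2`, so that
`c_s(j) = ∏_{k ≠ j} (x_j - x_k + h) / (x_j - x_k)`. With `P(t) = ∏_k (t - x_k + h)`, the product of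
the numerators is `P(x_j) / h`. Subtracting the monic nodal polynomial `Q(t) = ∏_k (t - x_k)` does
not change the values at the nodes and lowers the degree below `r`, so Lagrange interpolation
expresses the coefficient of `t ^ (r - 1)` in `P - Q`, which is `r h`, as
`∑_j P(x_j) / ∏_{k ≠ j} (x_j - x_k) = h ∑_j c_s(j)`.
-/

section Nodal

open Polynomial Lagrange

variable {ι R : Type*} [CommRing R]

theorem degree_nodal_sub_nodal_lt [Nontrivial R] (s : Finset ι) (x y : ι → R) :
    (nodal s y - nodal s x).degree < #s := by
  have degree_eq : (nodal s y).degree = (nodal s x).degree := by rw [degree_nodal, degree_nodal]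
  have leadingCoeff_eq : (nodal s y).leadingCoeff = (nodal s x).leadingCoeff :=
    nodal_monic.trans nodal_monic.symm
  simpa only [degree_nodal] using degree_sub_lt_left degree_eq nodal_ne_zero leadingCoeff_eq

theorem coeff_card_pred_nodal_sub_nodal {s : Finset ι} (hs : s.Nonempty) (x y : ι → R) :
    (nodal s y - nodal s x).coeff (#s - 1) = ∑ i ∈ s, (x i - y i) := by
  rw [coeff_sub, nodal_eq, nodal_eq, prod_X_sub_C_coeff_card_pred s y hs.card_pos,
    prod_X_sub_C_coeff_card_pred s x hs.card_pos, neg_sub_neg, sum_sub_distrib]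

theorem eval_nodal_sub_nodal_at_node {s : Finset ι} {i : ι} (hi : i ∈ s) (x y : ι → R) :
    (nodal s y - nodal s x).eval (x i) = ∏ j ∈ s, (x i - y j) := by
  rw [eval_sub, eval_nodal_at_node hi, sub_zero, eval_nodal]

end Nodal

section PartialFractions

variable {ι F : Type*} [DecidableEq ι] [Field F] {s : Finset ι} {x : ι → F}

theorem sum_prod_sub_div_prod_erase_sub (hx : Set.InjOn x s) (y : ι → F) :
    ∑ i ∈ s, (∏ j ∈ s, (x i - y j)) / ∏ j ∈ s.erase i, (x i - x j) = ∑ i ∈ s, (x i - y i) := by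
  obtain rfl | hs := s.eq_empty_or_nonempty
  · simp only [sum_empty]
  rw [← coeff_card_pred_nodal_sub_nodal hs,
    Lagrange.coeff_eq_sum hx (degree_nodal_sub_nodal_lt s x y)]
  exact sum_congr rfl fun i hi ↦ by rw [eval_nodal_sub_nodal_at_node hi]

theorem sum_prod_erase_sub_add_div_sub (hx : Set.InjOn x s) (h : F) :
    ∑ i ∈ s, ∏ j ∈ s.erase i, (x i - x j + h) / (x i - x j) = #s := by
  obtain rfl | hh := eq_or_ne h 0
  · have factor_eq_one : ∀ i ∈ s, ∀ j ∈ s.erase i, (x i - x j + 0) / (x i - x j) = 1 := by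
      intro i hi j hj
      have sub_ne : x i - x j ≠ 0 :=
        sub_ne_zero.mpr (hx.ne hi (mem_of_mem_erase hj) (ne_of_mem_erase hj).symm)
      rw [add_zero, div_self sub_ne]
    rw [sum_congr rfl fun i hi ↦ prod_eq_one (factor_eq_one i hi), sum_const, nsmul_one]
  -- The factor `j = i` missing on the right is `x i - (x i - h) = h`.
  have prod_eq : ∀ i ∈ s, ∏ j ∈ s, (x i - (x j - h)) = h * ∏ j ∈ s.erase i, (x i - x j + h) := by
    intro i hi
    rw [← mul_prod_erase s _ hi, sub_sub_cancel]
    simp only [sub_sub_eq_add_sub, sub_add_eq_add_sub]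
  refine mul_left_cancel₀ hh ?_
  calc h * ∑ i ∈ s, ∏ j ∈ s.erase i, (x i - x j + h) / (x i - x j)
      = ∑ i ∈ s, (∏ j ∈ s, (x i - (x j - h))) / ∏ j ∈ s.erase i, (x i - x j) := by
        rw [mul_sum]
        exact sum_congr rfl fun i hi ↦ by rw [prod_eq i hi, prod_div_distrib, mul_div_assoc]
    _ = ∑ i ∈ s, (x i - (x i - h)) := sum_prod_sub_div_prod_erase_sub hx _
    _ = h * #s := by simp only [sub_sub_cancel, sum_const, nsmul_eq_mul, mul_comm]

end PartialFractions

section Signature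

variable {r : ℕ} (a : ℝ) (s : Fin r → ℕ)

/-- The shifted signature `x_j = s_j - (a/2) j`, whose differences `x_j - x_k` are the denominators
of `cFun a s j`. The index `j` is zero-based, which only translates all the `x_j`. -/
noncomputable def shiftedSignature (j : Fin r) : ℝ :=
  s j - a / 2 * (j : ℕ)

theorem cFun_eq_prod_shiftedSignature (j : Fin r) :
    cFun a s j = ∏ k ∈ univ.erase j,
      (shiftedSignature a s j - shiftedSignature a s k + a / 2) /
        (shiftedSignature a s j - shiftedSignature a s k) := by
  unfold cFun shiftedSignature
  refine prod_congr rfl fun k _ ↦ ?_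
  congr 1 <;> ring

variable {a s}

theorem strictAnti_shiftedSignature (ha : 0 < a) (hs : Antitone s) :
    StrictAnti (shiftedSignature a s) := by
  intro i j hij
  have s_le : (s j : ℝ) ≤ s i := Nat.cast_le.mpr (hs hij.le)
  have shift_lt : a / 2 * (i : ℕ) < a / 2 * (j : ℕ) :=
    mul_lt_mul_of_pos_left (Nat.cast_lt.mpr hij) (half_pos ha)
  unfold shiftedSignature
  linarith

theorem sum_cFun_eq_rank_general (hs : Function.Injective (shiftedSignature a s)) :
    ∑ j : Fin r, cFun a s j = r := by
  simp only [cFun_eq_prod_shiftedSignature]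
  rw [sum_prod_erase_sub_add_div_sub hs.injOn, card_univ, Fintype.card_fin]

end Signature

/-- Second half of Lemma 3.3: for every signature `s` (an antitone `r`-tuple of
nonnegative integers), `Σ_{j=1}^r c_s(j) = r`. -/
theorem sum_cFun_eq_rank (r : ℕ) (hr : 0 < r) (a : ℝ) (ha : 0 < a)
    (s : Fin r → ℕ) (hs : Antitone s) :
    ∑ j : Fin r, cFun a s j = r :=
  sum_cFun_eq_rank_general (strictAnti_shiftedSignature ha hs).injective
end

section
/- With the notation of the context, the following are equivalent: (i) inf{ τ(s) : s a nonzero signature } > 0; (ii) B := inf{ Σ, over those j for which s − ε_j is a signature, of (a_{s−ε_j}/a_s)·(p − (a/2)(j−1) + s_j − 1) : s a nonzero signature } > 0. (This is the analytic content of Theorem 3.6: the range of the row operator D_{M^{(a)*}} is closed if and only if B > 0.) -/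
open Finset
open scoped Classical

/-- `SigSub s j` says that `s − ε_j` is again a signature. -/
def SigSub {r : ℕ} (s : Fin r → ℕ) (j : Fin r) : Prop :=
  1 ≤ s j ∧ Antitone (Function.update s j (s j - 1))

/-- The coefficient `c'_s(j)` from Lemma 3.3 of the paper. -/
noncomputable def cPrime {r : ℕ} (a : ℝ) (s : Fin r → ℕ) (j : Fin r) : ℝ :=
  ∏ k ∈ Finset.univ.erase j,
    (((s j : ℝ) - (s k : ℝ) + (a / 2) * (((k : ℕ) : ℝ) - ((j : ℕ) : ℝ) - 1)) /
      ((s j : ℝ) - (s k : ℝ) + (a / 2) * (((k : ℕ) : ℝ) - ((j : ℕ) : ℝ))))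

/-- The eigenvalue `τ(s)` with weights `w s = a_s` and `p = 1 + (a/2)(r−1) + b`. -/
noncomputable def tau {r : ℕ} (a b : ℝ) (w : (Fin r → ℕ) → ℝ) (s : Fin r → ℕ) : ℝ :=
  ∑ j ∈ Finset.univ.filter (fun j : Fin r => SigSub s j),
    (w (Function.update s j (s j - 1)) / w s) *
      ((1 + (a / 2) * ((r : ℝ) - 1) + b) - (a / 2) * ((j : ℕ) : ℝ) + (s j : ℝ) - 1) *
      (((a / 2) * ((r : ℝ) - 1 - ((j : ℕ) : ℝ)) + (s j : ℝ)) /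
        (b + (a / 2) * ((r : ℝ) - 1 - ((j : ℕ) : ℝ)) + (s j : ℝ))) *
      cPrime a s j

/-!
Put `x_j = (a/2)(r - j) + s_j`. Since `p - (a/2)(j - 1) + s_j - 1 = b + x_j`, the second factor of
a summand of `τ(s)` cancels the denominator of the third, and `c'_s(j)` is the product over `k ≠ j`
of `(x_j - x_k - a/2) / (x_j - x_k)`. Whenever `s - ε_j` is a signature, `x_j ≥ 1`, and every gap
`x_j - x_k` is at most `-a/2` or at least `1 + a/2`. Hence `b + x_j` is comparable to `x_j`, and
`c'_s(j)` is bounded above and away from zero, uniformly in `s` and `j`; so `τ(s)` and the sum in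
`(ii)` are both comparable, term by term, to `Σ_j (a_{s-ε_j}/a_s) x_j`.
-/

theorem sub_div_self_mem_Icc {c x : ℝ} (hc : 0 < c) (hx : x ≤ -c ∨ 1 + c ≤ x) :
    (x - c) / x ∈ Set.Icc (1 + c)⁻¹ 2 := by
  rcases hx with hx | hx
  · have hinv : (1 + c)⁻¹ ≤ 1 := inv_le_one_of_one_le₀ (by linarith)
    have hone : 1 ≤ (x - c) / x := (one_le_div_of_neg (by linarith)).2 (by linarith)
    exact ⟨hinv.trans hone, (div_le_iff_of_neg (by linarith)).2 (by linarith)⟩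
  · have hx_pos : 0 < x := by linarith
    refine ⟨?_, (div_le_iff₀ hx_pos).2 (by linarith)⟩
    rw [inv_eq_one_div, div_le_div_iff₀ (by linarith) hx_pos]
    nlinarith

theorem add_le_max_one_mul {b x : ℝ} (hx : 1 ≤ x) : b + x ≤ max 1 (1 + b) * x := by
  rcases le_total 0 b with hb | hb
  · rw [max_eq_right (by linarith)]
    nlinarith
  · rw [max_eq_left (by linarith)]
    linarith

theorem min_one_mul_le_add {b x : ℝ} (hx : 1 ≤ x) : min 1 (1 + b) * x ≤ b + x := by
  rcases le_total 0 b with hb | hb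
  · rw [min_eq_left (by linarith)]
    linarith
  · rw [min_eq_right (by linarith)]
    nlinarith

/-- The shifted entry `x_j = (a/2)(r - j) + s_j` of `s`; the index `j` of the paper is
`(j : ℕ) + 1` here. The differences `x_j - x_k` are the denominators in `c'_s(j)`. -/
noncomputable def shiftedEntry {r : ℕ} (a : ℝ) (s : Fin r → ℕ) (j : Fin r) : ℝ :=
  (a / 2) * ((r : ℝ) - 1 - ((j : ℕ) : ℝ)) + (s j : ℝ)

/-- The sum `Σ_j (a_{s-ε_j}/a_s)(b + x_j)` over those `j` for which `s - ε_j` is a signature, whose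
infimum over `s` is the constant `B` of the paper. -/
noncomputable def rowSum {r : ℕ} (a b : ℝ) (w : (Fin r → ℕ) → ℝ) (s : Fin r → ℕ) : ℝ :=
  ∑ j with SigSub s j, w (Function.update s j (s j - 1)) / w s * (b + shiftedEntry a s j)

section Signature

variable {r : ℕ} {a b : ℝ} {w : (Fin r → ℕ) → ℝ} {s : Fin r → ℕ} {j k : Fin r}

theorem SigSub.lt_of_lt (hj : SigSub s j) (hjk : j < k) : s k < s j := by
  have hle : s k ≤ s j - 1 := by simpa [hjk.ne'] using hj.2 hjk.le
  have hpos : 1 ≤ s j := hj.1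
  omega

theorem one_le_shiftedEntry (ha : 0 ≤ a) (hj : 1 ≤ s j) : 1 ≤ shiftedEntry a s j := by
  have hsj : (1 : ℝ) ≤ s j := by exact_mod_cast hj
  have hjr : ((j : ℕ) : ℝ) + 1 ≤ r := by exact_mod_cast j.2
  have hshift : 0 ≤ a / 2 * ((r : ℝ) - 1 - ((j : ℕ) : ℝ)) :=
    mul_nonneg (by linarith) (by linarith)
  unfold shiftedEntry
  linarith

theorem shiftedEntry_sub_le_of_lt (ha : 0 ≤ a) (hs : Antitone s) (hkj : k < j) :
    shiftedEntry a s j - shiftedEntry a s k ≤ -(a / 2) := by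
  have hsjk : (s j : ℝ) ≤ s k := by exact_mod_cast hs hkj.le
  have hindex : ((k : ℕ) : ℝ) + 1 ≤ ((j : ℕ) : ℝ) := by exact_mod_cast hkj
  unfold shiftedEntry
  nlinarith

theorem SigSub.le_shiftedEntry_sub (ha : 0 ≤ a) (hj : SigSub s j) (hjk : j < k) :
    1 + a / 2 ≤ shiftedEntry a s j - shiftedEntry a s k := by
  have hsjk : (s k : ℝ) + 1 ≤ s j := by exact_mod_cast hj.lt_of_lt hjk
  have hindex : ((j : ℕ) : ℝ) + 1 ≤ ((k : ℕ) : ℝ) := by exact_mod_cast hjk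
  unfold shiftedEntry
  nlinarith

theorem cPrime_eq_prod_shiftedEntry (a : ℝ) (s : Fin r → ℕ) (j : Fin r) :
    cPrime a s j = ∏ k ∈ univ.erase j,
      (shiftedEntry a s j - shiftedEntry a s k - a / 2) /
        (shiftedEntry a s j - shiftedEntry a s k) := by
  unfold cPrime shiftedEntry
  refine prod_congr rfl fun k _ => ?_
  congr 1 <;> ring

theorem cPrime_mem_Icc (ha : 0 < a) (hs : Antitone s) (hj : SigSub s j) :
    cPrime a s j ∈ Set.Icc ((1 + a / 2)⁻¹ ^ (r - 1)) (2 ^ (r - 1)) := by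
  have hcard : #(univ.erase j) = r - 1 := by simp
  have hfactor (k) (hk : k ∈ univ.erase j) :
      (shiftedEntry a s j - shiftedEntry a s k - a / 2) /
        (shiftedEntry a s j - shiftedEntry a s k) ∈ Set.Icc (1 + a / 2)⁻¹ 2 := by
    refine sub_div_self_mem_Icc (half_pos ha) ?_
    exact (ne_of_mem_erase hk).lt_or_gt.imp (shiftedEntry_sub_le_of_lt ha.le hs)
      (hj.le_shiftedEntry_sub ha.le)
  have hinv : 0 ≤ (1 + a / 2)⁻¹ := by positivity
  rw [cPrime_eq_prod_shiftedEntry, ← hcard, ← prod_const, ← prod_const]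
  exact ⟨prod_le_prod (fun _ _ => hinv) fun k hk => (hfactor k hk).1,
    prod_le_prod (fun k hk => hinv.trans (hfactor k hk).1) fun k hk => (hfactor k hk).2⟩

theorem rowSum_eq_sum (a b : ℝ) (w : (Fin r → ℕ) → ℝ) (s : Fin r → ℕ) :
    rowSum a b w s = ∑ j with SigSub s j, w (Function.update s j (s j - 1)) / w s *
      ((1 + (a / 2) * ((r : ℝ) - 1) + b) - (a / 2) * ((j : ℕ) : ℝ) + (s j : ℝ) - 1) := by
  unfold rowSum shiftedEntry
  refine sum_congr rfl fun j _ => ?_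
  ring

theorem tau_eq_sum_shiftedEntry_mul_cPrime (ha : 0 ≤ a) (hb : -1 < b) (w : (Fin r → ℕ) → ℝ)
    (s : Fin r → ℕ) :
    tau a b w s = ∑ j with SigSub s j,
      w (Function.update s j (s j - 1)) / w s * shiftedEntry a s j * cPrime a s j := by
  refine sum_congr rfl fun j hj => ?_
  have hx : 1 ≤ shiftedEntry a s j := one_le_shiftedEntry ha (mem_filter.1 hj).2.1
  have hden : b + shiftedEntry a s j ≠ 0 := by linarith
  have hcoeff : (1 + (a / 2) * ((r : ℝ) - 1) + b) - (a / 2) * ((j : ℕ) : ℝ) + (s j : ℝ) - 1 =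
      b + shiftedEntry a s j := by
    unfold shiftedEntry
    ring
  rw [add_assoc b, ← shiftedEntry, hcoeff, mul_assoc (_ / _), mul_div_cancel₀ _ hden]

theorem SigSub.weight_div_nonneg (hw : ∀ t, Antitone t → 0 ≤ w t) (hs : Antitone s)
    (hj : SigSub s j) : 0 ≤ w (Function.update s j (s j - 1)) / w s :=
  div_nonneg (hw _ hj.2) (hw s hs)

theorem rowSum_le_mul_rowSum_zero (ha : 0 ≤ a) (hw : ∀ t, Antitone t → 0 ≤ w t)
    (hs : Antitone s) : rowSum a b w s ≤ max 1 (1 + b) * rowSum a 0 w s := by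
  unfold rowSum
  rw [mul_sum]
  refine sum_le_sum fun j hj => ?_
  have hj : SigSub s j := (mem_filter.1 hj).2
  rw [zero_add, mul_left_comm]
  exact mul_le_mul_of_nonneg_left (add_le_max_one_mul (one_le_shiftedEntry ha hj.1))
    (hj.weight_div_nonneg hw hs)

theorem mul_rowSum_zero_le_rowSum (ha : 0 ≤ a) (hw : ∀ t, Antitone t → 0 ≤ w t)
    (hs : Antitone s) : min 1 (1 + b) * rowSum a 0 w s ≤ rowSum a b w s := by
  unfold rowSum
  rw [mul_sum]
  refine sum_le_sum fun j hj => ?_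
  have hj : SigSub s j := (mem_filter.1 hj).2
  rw [zero_add, mul_left_comm]
  exact mul_le_mul_of_nonneg_left (min_one_mul_le_add (one_le_shiftedEntry ha hj.1))
    (hj.weight_div_nonneg hw hs)

theorem SigSub.div_mul_shiftedEntry_nonneg (ha : 0 ≤ a) (hw : ∀ t, Antitone t → 0 ≤ w t)
    (hs : Antitone s) (hj : SigSub s j) :
    0 ≤ w (Function.update s j (s j - 1)) / w s * shiftedEntry a s j :=
  mul_nonneg (hj.weight_div_nonneg hw hs) (zero_le_one.trans (one_le_shiftedEntry ha hj.1))

theorem tau_le_mul_rowSum_zero (ha : 0 < a) (hb : -1 < b) (hw : ∀ t, Antitone t → 0 ≤ w t)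
    (hs : Antitone s) : tau a b w s ≤ 2 ^ (r - 1) * rowSum a 0 w s := by
  rw [tau_eq_sum_shiftedEntry_mul_cPrime ha.le hb, rowSum, mul_sum]
  refine sum_le_sum fun j hj => ?_
  have hj : SigSub s j := (mem_filter.1 hj).2
  rw [zero_add, mul_comm (2 ^ (r - 1))]
  exact mul_le_mul_of_nonneg_left (cPrime_mem_Icc ha hs hj).2
    (hj.div_mul_shiftedEntry_nonneg ha.le hw hs)

theorem mul_rowSum_zero_le_tau (ha : 0 < a) (hb : -1 < b) (hw : ∀ t, Antitone t → 0 ≤ w t)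
    (hs : Antitone s) : (1 + a / 2)⁻¹ ^ (r - 1) * rowSum a 0 w s ≤ tau a b w s := by
  rw [tau_eq_sum_shiftedEntry_mul_cPrime ha.le hb, rowSum, mul_sum]
  refine sum_le_sum fun j hj => ?_
  have hj : SigSub s j := (mem_filter.1 hj).2
  rw [zero_add, mul_comm (_ ^ (r - 1))]
  exact mul_le_mul_of_nonneg_left (cPrime_mem_Icc ha hs hj).1
    (hj.div_mul_shiftedEntry_nonneg ha.le hw hs)

end Signature

theorem tau_inf_pos_iff_general (r : ℕ) (a b : ℝ) (ha : 0 < a) (hb : -1 < b)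
    (w : (Fin r → ℕ) → ℝ) (hw : ∀ s : Fin r → ℕ, Antitone s → 0 < w s) :
    (∃ C : ℝ, 0 < C ∧ ∀ s : Fin r → ℕ, Antitone s → s ≠ 0 → C ≤ tau a b w s) ↔
      (∃ B : ℝ, 0 < B ∧ ∀ s : Fin r → ℕ, Antitone s → s ≠ 0 →
        B ≤ ∑ j ∈ Finset.univ.filter (fun j : Fin r => SigSub s j),
          (w (Function.update s j (s j - 1)) / w s) *
            ((1 + (a / 2) * ((r : ℝ) - 1) + b) - (a / 2) * ((j : ℕ) : ℝ) + (s j : ℝ) - 1)) := by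
  have hw' (t : Fin r → ℕ) (ht : Antitone t) : 0 ≤ w t := (hw t ht).le
  have hmin : 0 < min 1 (1 + b) := lt_min one_pos (by linarith)
  have hmax : 0 < max 1 (1 + b) := lt_max_of_lt_left one_pos
  simp only [← rowSum_eq_sum]
  constructor
  · rintro ⟨C, hC, hle⟩
    refine ⟨min 1 (1 + b) * (C / 2 ^ (r - 1)), by positivity, fun s hs hs0 => ?_⟩
    have hzero : C / 2 ^ (r - 1) ≤ rowSum a 0 w s := (div_le_iff₀' (by positivity)).2 <|
      (hle s hs hs0).trans (tau_le_mul_rowSum_zero ha hb hw' hs)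
    exact (mul_le_mul_of_nonneg_left hzero hmin.le).trans (mul_rowSum_zero_le_rowSum ha.le hw' hs)
  · rintro ⟨B, hB, hle⟩
    refine ⟨(1 + a / 2)⁻¹ ^ (r - 1) * (B / max 1 (1 + b)), by positivity, fun s hs hs0 => ?_⟩
    have hzero : B / max 1 (1 + b) ≤ rowSum a 0 w s := (div_le_iff₀' hmax).2 <|
      (hle s hs hs0).trans (rowSum_le_mul_rowSum_zero ha.le hw' hs)
    exact (mul_le_mul_of_nonneg_left hzero (by positivity)).trans
      (mul_rowSum_zero_le_tau ha hb hw' hs)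

/-- Theorem 3.6: `inf{τ(s) : s ≠ 0 a signature} > 0` if and only if the quantity
`B = inf Σ_j (a_{s−ε_j}/a_s)·(p − (a/2)(j−1) + s_j − 1)` is positive; equivalently,
the range of `D_{M^{(a)*}}` is closed iff `B > 0`. -/
theorem tau_inf_pos_iff (r : ℕ) (hr : 0 < r) (a b : ℝ) (ha : 0 < a) (hb : 0 ≤ b)
    (w : (Fin r → ℕ) → ℝ) (hw : ∀ s : Fin r → ℕ, Antitone s → 0 < w s) :
    (∃ C : ℝ, 0 < C ∧ ∀ s : Fin r → ℕ, Antitone s → s ≠ 0 → C ≤ tau a b w s) ↔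
      (∃ B : ℝ, 0 < B ∧ ∀ s : Fin r → ℕ, Antitone s → s ≠ 0 →
        B ≤ ∑ j ∈ Finset.univ.filter (fun j : Fin r => SigSub s j),
          (w (Function.update s j (s j - 1)) / w s) *
            ((1 + (a / 2) * ((r : ℝ) - 1) + b) - (a / 2) * ((j : ℕ) : ℝ) + (s j : ℝ) - 1)) :=
  tau_inf_pos_iff_general r a b ha (by linarith) w hw
end
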